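/- arXiv:2405.15091 — 4 statements merged into one kernel-verified Lean document; each statement's English description precedes it below -/
import Mathlib

section
/- Any two-dimensional ideal I of a symplectic alternating algebra L over a field 𝔽 is abelian (I·I = {0}) and contains a nonzero element of the center, i.e. I ∩ Z(L) ≠ {0}. -/
/-!
Everything rests on one fact: an alternating bilinear map of rank at most one vanishes.

Choose `e ∈ L` not orthogonal to `I`, so that `K = I ∩ e^⊥` has dimension at most one. Since
`(u·e, e) = 0`, multiplication by `e` maps `I` into `K`, hence kills some nonzero `z ∈ I`. Now
`(z·v, e) = -(z·e, v) = 0` shows `z·L ⊆ K`, so the alternating form `(v, w) ↦ (z·v, w)` has rank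
at most one. It therefore vanishes, and `z` is central by nondegeneracy. The multiplication
`I × I → L` has `z` in its radical, so it too has rank at most one and vanishes.
-/

variable {𝔽 : Type*} [Field 𝔽] {L : Type*} [AddCommGroup L] [Module 𝔽 L]

structure SymplecticAlternatingAlgebra (𝔽 L : Type*) [Field 𝔽] [AddCommGroup L]
    [Module 𝔽 L] where
  form : L →ₗ[𝔽] L →ₗ[𝔽] 𝔽
  mul : L →ₗ[𝔽] L →ₗ[𝔽] L
  form_alt : ∀ x, form x x = 0
  form_nondeg : ∀ x, (∀ y, form x y = 0) → x = 0
  mul_alt : ∀ x, mul x x = 0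
  compat : ∀ u v w, form (mul u v) w = form (mul v w) u

namespace SymplecticAlternatingAlgebra

variable (S : SymplecticAlternatingAlgebra 𝔽 L)

/-- `U·V`, the span of all products `u·v`. -/
def prodSub (U V : Submodule 𝔽 L) : Submodule 𝔽 L := Submodule.map₂ S.mul U V

/-- An ideal: `I·L ⊆ I`. -/
def IsIdeal (I : Submodule 𝔽 L) : Prop := S.prodSub I ⊤ ≤ I

/-- Orthogonal complement with respect to the form. -/
def perp (U : Submodule 𝔽 L) : Submodule 𝔽 L where
  carrier := {x | ∀ u ∈ U, S.form x u = 0}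
  add_mem' := by
    intro a b ha hb u hu
    simp [map_add, ha u hu, hb u hu]
  zero_mem' := by
    intro u hu
    simp
  smul_mem' := by
    intro c a ha u hu
    simp [ha u hu]

/-- `lcs n = L^(n+1)`: the lower central series, `lcs 0 = L¹ = L`. -/
def lcs : ℕ → Submodule 𝔽 L
  | 0 => ⊤
  | n + 1 => S.prodSub (lcs n) ⊤

/-- `ucs n = Z_n(L)`: the upper central series. -/
def ucs : ℕ → Submodule 𝔽 L
  | 0 => ⊥
  | n + 1 => ⨅ y : L, (ucs n).comap (S.mul.flip y)

/-- The center `Z(L)`. -/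
def center : Submodule 𝔽 L := ⨅ y : L, LinearMap.ker (S.mul.flip y)

/-- Nilpotency: some term of the lower central series vanishes. -/
def IsNilpotent : Prop := ∃ n, S.lcs n = ⊥

/-- `s` generates `L` as an algebra: the smallest subspace containing `s`
and closed under the multiplication is `L` itself. -/
def Generates (s : Set L) : Prop :=
  ∀ M : Submodule 𝔽 L, s ⊆ (M : Set L) → S.prodSub M M ≤ M → M = ⊤

end SymplecticAlternatingAlgebra

open SymplecticAlternatingAlgebra Module


lemma eq_zero_of_isAlt_of_isPrincipal_range {R M N : Type*} [CommRing R] [AddCommGroup M]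
    [Module R M] [AddCommGroup N] [Module R N] {B : M →ₗ[R] M →ₗ[R] N} (hB : B.IsAlt)
    (hrange : (LinearMap.range B).IsPrincipal) : B = 0 := by
  obtain ⟨φ, hφ⟩ := hrange
  have exists_smul (x : M) : ∃ c : R, c • φ = B x :=
    Submodule.mem_span_singleton.1 (hφ ▸ LinearMap.mem_range_self B x)
  obtain ⟨w, hw⟩ : φ ∈ LinearMap.range B := hφ ▸ Submodule.mem_span_singleton_self φ
  have hφ_zero : φ = 0 := by
    ext x
    obtain ⟨c, hc⟩ := exists_smul x
    calc
      φ x = -B x w := by rw [hB.neg, hw]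
      _ = -(c • B w w) := by rw [← hc, hw, LinearMap.smul_apply]
      _ = 0 := by rw [hB.self_eq_zero, smul_zero, neg_zero]
  ext x : 1
  obtain ⟨c, hc⟩ := exists_smul x
  rw [← hc, hφ_zero, smul_zero, LinearMap.zero_apply]

namespace SymplecticAlternatingAlgebra

variable (S : SymplecticAlternatingAlgebra 𝔽 L)

lemma form_mul_self_right (u v : L) : S.form (S.mul u v) v = 0 := by
  rw [S.compat, S.mul_alt, map_zero, LinearMap.zero_apply]

lemma form_mul_right_anticomm (u v w : L) : S.form (S.mul u v) w = -S.form (S.mul u w) v :=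
  have hT : (S.form ∘ₗ S.mul u).IsAlt := S.form_mul_self_right u
  (hT.neg w v).symm

variable {S}

lemma mem_center {z : L} : z ∈ S.center ↔ ∀ v, S.mul z v = 0 := by
  simp [center]

lemma mem_center_of_isPrincipal_range_mul {z : L}
    (hz : (LinearMap.range (S.mul z)).IsPrincipal) : z ∈ S.center := by
  have hT : (S.form ∘ₗ S.mul z).IsAlt := S.form_mul_self_right z
  have hT_zero : S.form ∘ₗ S.mul z = 0 :=
    eq_zero_of_isAlt_of_isPrincipal_range hT (LinearMap.range_comp (S.mul z) S.form ▸ hz.map S.form)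
  exact mem_center.2 fun v => S.form_nondeg _ fun w => LinearMap.congr_fun₂ hT_zero v w

lemma IsIdeal.mul_mem {I : Submodule 𝔽 L} (hI : S.IsIdeal I) {u : L} (hu : u ∈ I) (v : L) :
    S.mul u v ∈ I :=
  hI (Submodule.apply_mem_map₂ S.mul hu Submodule.mem_top)

lemma IsIdeal.inf_center_ne_bot {I : Submodule 𝔽 L} [FiniteDimensional 𝔽 I] (hI : S.IsIdeal I)
    (hne : I ≠ ⊥) (hdim : finrank 𝔽 I ≤ 2) : I ⊓ S.center ≠ ⊥ := by
  obtain ⟨x, hxI, hx⟩ := Submodule.exists_mem_ne_zero_of_ne_bot hne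
  obtain ⟨e, he⟩ : ∃ e, S.form x e ≠ 0 := by
    by_contra! h
    exact hx (S.form_nondeg x h)
  let K := I ⊓ LinearMap.ker (S.form.flip e)
  have hKI : finrank 𝔽 K < finrank 𝔽 I :=
    Submodule.finrank_lt_finrank_of_lt (inf_lt_left.2 fun h => he (h hxI))
  have hmul_e (u : L) (hu : u ∈ I) : S.mul.flip e u ∈ K :=
    ⟨hI.mul_mem hu e, S.form_mul_self_right u e⟩
  obtain ⟨⟨z, hzI⟩, hz_ker, hz⟩ := Submodule.exists_mem_ne_zero_of_ne_bot
    (LinearMap.ker_ne_bot_of_finrank_lt (f := (S.mul.flip e).restrict hmul_e) hKI)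
  have hze : S.mul z e = 0 := congrArg Subtype.val hz_ker
  have hform (v : L) : S.form (S.mul z v) e = 0 := by
    rw [form_mul_right_anticomm, hze, map_zero, LinearMap.zero_apply, neg_zero]
  have hrange : LinearMap.range (S.mul z) ≤ K := by
    rintro _ ⟨v, rfl⟩
    exact ⟨hI.mul_mem hzI v, hform v⟩
  have := Submodule.finiteDimensional_of_le hrange
  have hrank := Submodule.finrank_mono hrange
  have hz_center : z ∈ S.center := mem_center_of_isPrincipal_range_mul <|
    (Submodule.finrank_le_one_iff_isPrincipal _).1 (by omega)
  exact (Submodule.ne_bot_iff _).2 ⟨z, ⟨hzI, hz_center⟩, fun h => hz (Subtype.ext h)⟩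

lemma prodSub_self_eq_bot_of_inf_center_ne_bot {U : Submodule 𝔽 L} [FiniteDimensional 𝔽 U]
    (hdim : finrank 𝔽 U ≤ 2) (hcenter : U ⊓ S.center ≠ ⊥) : S.prodSub U U = ⊥ := by
  let B := S.mul.domRestrict₁₂ U U
  have hker : LinearMap.ker B ≠ ⊥ := by
    obtain ⟨z, ⟨hzU, hzcenter⟩, hz⟩ := Submodule.exists_mem_ne_zero_of_ne_bot hcenter
    refine (Submodule.ne_bot_iff _).2 ⟨⟨z, hzU⟩, ?_, fun h => hz (congrArg Subtype.val h)⟩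
    exact LinearMap.ext fun v => mem_center.1 hzcenter v
  have hrank : finrank 𝔽 (LinearMap.range B) ≤ 1 := by
    have := Submodule.one_le_finrank_iff.2 hker
    have := B.finrank_range_add_finrank_ker
    omega
  have hB : B = 0 := eq_zero_of_isAlt_of_isPrincipal_range (fun u => S.mul_alt u)
    ((Submodule.finrank_le_one_iff_isPrincipal _).1 hrank)
  exact le_bot_iff.1 <| Submodule.map₂_le.2 fun u hu v hv =>
    LinearMap.congr_fun₂ hB ⟨u, hu⟩ ⟨v, hv⟩

end SymplecticAlternatingAlgebra

theorem two_dim_ideal_abelian_and_meets_center_general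
    (S : SymplecticAlternatingAlgebra 𝔽 L) (I : Submodule 𝔽 L) [FiniteDimensional 𝔽 I]
    (hI : S.IsIdeal I) (hne : I ≠ ⊥) (hdim : finrank 𝔽 I ≤ 2) :
    S.prodSub I I = ⊥ ∧ I ⊓ S.center ≠ ⊥ :=
  have hcenter : I ⊓ S.center ≠ ⊥ := hI.inf_center_ne_bot hne hdim
  ⟨prodSub_self_eq_bot_of_inf_center_ne_bot hdim hcenter, hcenter⟩

theorem two_dim_ideal_abelian_and_meets_center [FiniteDimensional 𝔽 L]
    (S : SymplecticAlternatingAlgebra 𝔽 L) (I : Submodule 𝔽 L) (hI : S.IsIdeal I)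
    (hdim : Module.finrank 𝔽 I = 2) :
    S.prodSub I I = ⊥ ∧ I ⊓ S.center ≠ ⊥ := by
  refine two_dim_ideal_abelian_and_meets_center_general S I hI ?_ hdim.le
  exact Submodule.one_le_finrank_iff.1 (hdim ▸ one_le_two)
end

section
/- Let L be a nonzero symplectic alternating algebra over a field 𝔽. Then either L has a nonzero abelian ideal, or L is semi-simple: L decomposes as an internal direct sum L = I₁ ⊕ ⋯ ⊕ I_m of pairwise orthogonal nonzero ideals I₁, …, I_m such that the restriction of the alternating form to each I_j is nondegenerate and each I_j, viewed as an SAA with the restricted form and multiplication, is simple (has no ideals other than {0} and itself). -/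
/-!
The trilinear form `(u·v, w)` is alternating. This has two consequences for an ideal `I`: it
annihilates `I^⊥`, so that `I ⊓ I^⊥` is an abelian ideal; and if it annihilates a subspace `U`, then
`I·L` is orthogonal to `U`.

Suppose `L` has no nonzero abelian ideal. Then `I ⊓ I^⊥ = 0` for every ideal `I`, so `L = I ⊕ I^⊥`
by finite dimension. The simple summands are *all* the minimal ideals. Indeed, distinct minimal
ideals `A` and `B` meet trivially, so `A·B = 0`, and `A·L = A` because `A·L` is an ideal inside the
nonabelian `A`; hence `A = A·L` is orthogonal to `B`. The sum of all minimal ideals is everything,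
since otherwise its orthogonal complement would contain another one. Finally an ideal of the algebra
`A` is annihilated by `A^⊥`, so it is an ideal of `L`, and minimality of `A` makes `A` simple.
-/

variable {𝔽 : Type*} [Field 𝔽] {L : Type*} [AddCommGroup L] [Module 𝔽 L]

open SymplecticAlternatingAlgebra Module

namespace SymplecticAlternatingAlgebra

section Products

variable {S : SymplecticAlternatingAlgebra 𝔽 L} {U V U' V' W : Submodule 𝔽 L}

lemma prodSub_le : S.prodSub U V ≤ W ↔ ∀ u ∈ U, ∀ v ∈ V, S.mul u v ∈ W :=
  Submodule.map₂_le

lemma prodSub_mono (hU : U ≤ U') (hV : V ≤ V') : S.prodSub U V ≤ S.prodSub U' V' :=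
  Submodule.map₂_le_map₂ hU hV

lemma prodSub_eq_bot_iff : S.prodSub U V = ⊥ ↔ ∀ u ∈ U, ∀ v ∈ V, S.mul u v = 0 := by
  simp only [← le_bot_iff, prodSub_le, Submodule.mem_bot]

lemma prodSub_top_le_perp (h : S.prodSub U V = ⊥) : S.prodSub U ⊤ ≤ S.perp V := by
  refine prodSub_le.2 fun u hu x _ v hv => ?_
  have hvu : S.mul v u = 0 :=
    LinearMap.IsAlt.isRefl S.mul_alt _ _ (prodSub_eq_bot_iff.1 h u hu v hv)
  rw [S.compat, S.compat, hvu, map_zero, LinearMap.zero_apply]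

end Products

section Perp

variable {S : SymplecticAlternatingAlgebra 𝔽 L}

lemma perp_eq_orthogonal (U : Submodule 𝔽 L) :
    S.perp U = LinearMap.BilinForm.orthogonal S.form U := by
  ext x
  exact forall₂_congr fun u _ => LinearMap.IsAlt.eq_iff S.form_alt

lemma isCompl_perp_iff_disjoint [FiniteDimensional 𝔽 L] {U : Submodule 𝔽 L} :
    IsCompl U (S.perp U) ↔ Disjoint U (S.perp U) := by
  rw [perp_eq_orthogonal]
  exact LinearMap.BilinForm.isCompl_orthogonal_iff_disjoint (LinearMap.IsAlt.isRefl S.form_alt)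

lemma iSupIndep_of_pairwise_le_perp {ι : Type*} {U : ι → Submodule 𝔽 L}
    (horth : Pairwise fun i j => U i ≤ S.perp (U j))
    (hdisj : ∀ i, Disjoint (U i) (S.perp (U i))) : iSupIndep U :=
  fun i => (hdisj i).mono_right (iSup₂_le fun _ hj => horth hj)

end Perp

section Ideals

variable {S : SymplecticAlternatingAlgebra 𝔽 L} {I J K : Submodule 𝔽 L}

namespace IsIdeal

lemma mul_mem_right (hI : S.IsIdeal I) {x : L} (hx : x ∈ I) (y : L) : S.mul x y ∈ I :=
  prodSub_le.1 hI x hx y Submodule.mem_top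

lemma mul_mem_left (hI : S.IsIdeal I) (x : L) {y : L} (hy : y ∈ I) : S.mul x y ∈ I := by
  rw [← LinearMap.IsAlt.neg S.mul_alt]
  exact I.neg_mem (hI.mul_mem_right hy x)

lemma prodSub_le_inf (hI : S.IsIdeal I) (hJ : S.IsIdeal J) : S.prodSub I J ≤ I ⊓ J :=
  prodSub_le.2 fun x hx y hy => ⟨hI.mul_mem_right hx y, hJ.mul_mem_left x hy⟩

lemma inf (hI : S.IsIdeal I) (hJ : S.IsIdeal J) : S.IsIdeal (I ⊓ J) :=
  le_inf ((prodSub_mono inf_le_left le_rfl).trans hI) ((prodSub_mono inf_le_right le_rfl).trans hJ)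

lemma sSup {s : Set (Submodule 𝔽 L)} (hs : ∀ I ∈ s, S.IsIdeal I) : S.IsIdeal (sSup s) := by
  rw [IsIdeal, prodSub, sSup_eq_iSup', Submodule.map₂_iSup_left]
  exact iSup_mono fun I => hs I I.2

lemma prodSub_top (hI : S.IsIdeal I) : S.IsIdeal (S.prodSub I ⊤) :=
  prodSub_mono hI le_rfl

lemma perp (hI : S.IsIdeal I) : S.IsIdeal (S.perp I) := by
  refine prodSub_le.2 fun x hx y _ u hu => ?_
  rw [S.compat]
  exact LinearMap.IsAlt.isRefl S.form_alt _ _ (hx _ (hI.mul_mem_left y hu))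

lemma prodSub_perp_eq_bot (hI : S.IsIdeal I) : S.prodSub I (S.perp I) = ⊥ := by
  refine prodSub_eq_bot_iff.2 fun x hx y hy => S.form_nondeg _ fun z => ?_
  rw [S.compat]
  exact hI.perp.mul_mem_right hy z x hx

lemma prodSub_inf_perp_self_eq_bot (hI : S.IsIdeal I) :
    S.prodSub (I ⊓ S.perp I) (I ⊓ S.perp I) = ⊥ :=
  le_bot_iff.1 ((prodSub_mono inf_le_left inf_le_right).trans hI.prodSub_perp_eq_bot.le)

lemma of_prodSub_le (hI : S.IsIdeal I) (hcodisj : Codisjoint I (S.perp I)) (hKI : K ≤ I)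
    (hK : S.prodSub K I ≤ K) : S.IsIdeal K := by
  have hperp : S.prodSub K (S.perp I) ≤ K :=
    (prodSub_mono hKI le_rfl).trans (hI.prodSub_perp_eq_bot.trans_le bot_le)
  rw [IsIdeal, ← hcodisj.eq_top, prodSub, Submodule.map₂_sup_right]
  exact sup_le hK hperp

end IsIdeal

end Ideals

section MinimalIdeals

variable (S : SymplecticAlternatingAlgebra 𝔽 L)

/-- A minimal ideal: a nonzero ideal containing no smaller nonzero ideal. -/
def IsMinimalIdeal (A : Submodule 𝔽 L) : Prop :=
  Minimal (fun I => S.IsIdeal I ∧ I ≠ ⊥) A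

variable {S} {A B I : Submodule 𝔽 L}

namespace IsMinimalIdeal

lemma isIdeal (hA : S.IsMinimalIdeal A) : S.IsIdeal A := hA.prop.1

lemma ne_bot (hA : S.IsMinimalIdeal A) : A ≠ ⊥ := hA.prop.2

lemma eq_bot_or_eq (hA : S.IsMinimalIdeal A) (hI : S.IsIdeal I) (hIA : I ≤ A) :
    I = ⊥ ∨ I = A :=
  or_iff_not_imp_left.2 fun hI0 => hA.eq_of_le ⟨hI, hI0⟩ hIA

lemma disjoint_of_ne (hA : S.IsMinimalIdeal A) (hB : S.IsMinimalIdeal B) (hne : A ≠ B) :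
    Disjoint A B := by
  have hAB : S.IsIdeal (A ⊓ B) := hA.isIdeal.inf hB.isIdeal
  by_contra hmeet
  rw [disjoint_iff] at hmeet
  exact hne ((hA.eq_of_le ⟨hAB, hmeet⟩ inf_le_left).symm.trans
    (hB.eq_of_le ⟨hAB, hmeet⟩ inf_le_right))

end IsMinimalIdeal

lemma IsIdeal.exists_isMinimalIdeal_le [FiniteDimensional 𝔽 L] (hI : S.IsIdeal I) (hI0 : I ≠ ⊥) :
    ∃ A ≤ I, S.IsMinimalIdeal A :=
  exists_minimal_le_of_wellFoundedLT _ I ⟨hI, hI0⟩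

end MinimalIdeals

section HasNoAbelianIdeal

variable (S : SymplecticAlternatingAlgebra 𝔽 L)

/-- The algebra has no abelian ideal other than zero, one side of the dichotomy between abelian
ideals and semisimplicity. -/
def HasNoAbelianIdeal : Prop :=
  ∀ I : Submodule 𝔽 L, S.IsIdeal I → S.prodSub I I = ⊥ → I = ⊥

variable {S} {A B I : Submodule 𝔽 L}

namespace HasNoAbelianIdeal

lemma disjoint_perp (hS : S.HasNoAbelianIdeal) (hI : S.IsIdeal I) : Disjoint I (S.perp I) :=
  disjoint_iff.2 (hS _ (hI.inf hI.perp) hI.prodSub_inf_perp_self_eq_bot)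

lemma isCompl_perp [FiniteDimensional 𝔽 L] (hS : S.HasNoAbelianIdeal) (hI : S.IsIdeal I) :
    IsCompl I (S.perp I) :=
  isCompl_perp_iff_disjoint.2 (hS.disjoint_perp hI)

lemma prodSub_top_eq_self (hS : S.HasNoAbelianIdeal) (hA : S.IsMinimalIdeal A) :
    S.prodSub A ⊤ = A := by
  refine (hA.eq_bot_or_eq hA.isIdeal.prodSub_top hA.isIdeal).resolve_left fun h => hA.ne_bot ?_
  exact hS A hA.isIdeal (le_bot_iff.1 ((prodSub_mono le_rfl le_top).trans h.le))

lemma le_perp_of_ne (hS : S.HasNoAbelianIdeal) (hA : S.IsMinimalIdeal A)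
    (hB : S.IsMinimalIdeal B) (hne : A ≠ B) : A ≤ S.perp B := by
  have hAB : S.prodSub A B = ⊥ :=
    le_bot_iff.1 ((hA.isIdeal.prodSub_le_inf hB.isIdeal).trans (hA.disjoint_of_ne hB hne).le_bot)
  calc A = S.prodSub A ⊤ := (hS.prodSub_top_eq_self hA).symm
    _ ≤ S.perp B := prodSub_top_le_perp hAB

lemma finite_setOf_isMinimalIdeal [FiniteDimensional 𝔽 L] (hS : S.HasNoAbelianIdeal) :
    {A | S.IsMinimalIdeal A}.Finite := by
  refine WellFoundedGT.finite_of_sSupIndep ((sSupIndep_iff _).2 ?_)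
  exact iSupIndep_of_pairwise_le_perp
    (fun A B hne => hS.le_perp_of_ne A.2 B.2 (Subtype.coe_ne_coe.2 hne))
    fun A => hS.disjoint_perp A.2.isIdeal

lemma sSup_isMinimalIdeal_eq_top [FiniteDimensional 𝔽 L] (hS : S.HasNoAbelianIdeal) :
    sSup {A | S.IsMinimalIdeal A} = ⊤ := by
  set M := sSup {A | S.IsMinimalIdeal A}
  have hM : S.IsIdeal M := IsIdeal.sSup fun _ hA => hA.isIdeal
  suffices hperp : S.perp M = ⊥ from eq_top_of_isCompl_bot (hperp ▸ hS.isCompl_perp hM)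
  by_contra hperp
  obtain ⟨A, hAM, hA⟩ := hM.perp.exists_isMinimalIdeal_le hperp
  exact hA.ne_bot (le_bot_iff.1 (hS.disjoint_perp hM (le_sSup hA) hAM))

lemma eq_bot_or_eq_of_prodSub_le [FiniteDimensional 𝔽 L] (hS : S.HasNoAbelianIdeal)
    (hA : S.IsMinimalIdeal A) {K : Submodule 𝔽 L} (hKA : K ≤ A) (hK : S.prodSub K A ≤ K) :
    K = ⊥ ∨ K = A :=
  hA.eq_bot_or_eq
    (hA.isIdeal.of_prodSub_le (hS.isCompl_perp hA.isIdeal).codisjoint hKA hK) hKA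

end HasNoAbelianIdeal

end HasNoAbelianIdeal

end SymplecticAlternatingAlgebra

theorem abelian_ideal_or_semisimple [FiniteDimensional 𝔽 L]
    (S : SymplecticAlternatingAlgebra 𝔽 L) (hL : Nontrivial L) :
    (∃ I : Submodule 𝔽 L, S.IsIdeal I ∧ I ≠ ⊥ ∧ S.prodSub I I = ⊥) ∨
    (∃ (m : ℕ) (I : Fin m → Submodule 𝔽 L),
      (∀ j, S.IsIdeal (I j)) ∧
      (∀ j, I j ≠ ⊥) ∧
      (∀ j k, j ≠ k → ∀ u ∈ I j, ∀ v ∈ I k, S.form u v = 0) ∧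
      iSupIndep I ∧ (⨆ j, I j) = ⊤ ∧
      (∀ j, ∀ x ∈ I j, (∀ y ∈ I j, S.form x y = 0) → x = 0) ∧
      (∀ j, ∀ K : Submodule 𝔽 L, K ≤ I j → S.prodSub K (I j) ≤ K →
        K = ⊥ ∨ K = I j)) := by
  by_cases hS : S.HasNoAbelianIdeal
  · right
    obtain ⟨m, I, hinj, hrange⟩ := hS.finite_setOf_isMinimalIdeal.fin_param
    have hmin (j) : S.IsMinimalIdeal (I j) := hrange.subset (Set.mem_range_self j)
    have horth : Pairwise fun j k => I j ≤ S.perp (I k) := fun j k hjk =>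
      hS.le_perp_of_ne (hmin j) (hmin k) (hinj.ne hjk)
    have hdisj (j) : Disjoint (I j) (S.perp (I j)) := hS.disjoint_perp (hmin j).isIdeal
    have htop : ⨆ j, I j = ⊤ := by rw [← sSup_range, hrange, hS.sSup_isMinimalIdeal_eq_top]
    exact ⟨m, I, fun j => (hmin j).isIdeal, fun j => (hmin j).ne_bot,
      fun j k hjk u hu v hv => horth hjk hu v hv, iSupIndep_of_pairwise_le_perp horth hdisj, htop,
      fun j x hx hperp => Submodule.disjoint_def.1 (hdisj j) x hx hperp,
      fun j _ hKI hK => hS.eq_bot_or_eq_of_prodSub_le (hmin j) hKI hK⟩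
  · left
    simp only [HasNoAbelianIdeal, not_forall] at hS
    obtain ⟨I, hI, habelian, hne⟩ := hS
    exact ⟨I, hI, hne, habelian⟩
end

section
/- Let I and J be ideals of a symplectic alternating algebra L over a field 𝔽 and let x ∈ L. Then J·x ⊆ I if and only if I^⊥·x ⊆ J^⊥ (where for a subspace U, U·x denotes {u·x : u ∈ U}). -/
/-! Invariance of the form and the two alternating laws give `(u·x, v) = -(v·x, u)`, so right
multiplication by `x` maps `J` into `K^⊥` exactly when it maps `K` into `J^⊥`.
Take `K = I^⊥` and use `I^⊥⊥ = I`: the form embeds `L` into its dual, and a finite-dimensional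
subspace of the dual is the annihilator of its common kernel. -/

variable {𝔽 : Type*} [Field 𝔽] {L : Type*} [AddCommGroup L] [Module 𝔽 L]

open SymplecticAlternatingAlgebra Module

namespace SymplecticAlternatingAlgebra

variable (S : SymplecticAlternatingAlgebra 𝔽 L)

theorem form_mul_right_swap (u v x : L) :
    S.form (S.mul u x) v = -S.form (S.mul v x) u := by
  have mul_isAlt : S.mul.IsAlt := S.mul_alt
  rw [S.compat u x v, ← mul_isAlt.neg v x, map_neg, LinearMap.neg_apply]

theorem mul_right_mem_perp_comm (J K : Submodule 𝔽 L) (x : L) :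
    (∀ u ∈ J, S.mul u x ∈ S.perp K) ↔ ∀ v ∈ K, S.mul v x ∈ S.perp J :=
  calc (∀ u ∈ J, ∀ v ∈ K, S.form (S.mul u x) v = 0)
      ↔ ∀ v ∈ K, ∀ u ∈ J, S.form (S.mul u x) v = 0 := forall₂_comm
    _ ↔ ∀ v ∈ K, ∀ u ∈ J, S.form (S.mul v x) u = 0 :=
      forall₂_congr fun v _ => forall₂_congr fun u _ => by
        rw [S.form_mul_right_swap u v x, neg_eq_zero]

theorem form_injective : Function.Injective S.form :=
  LinearMap.ker_eq_bot.1 (LinearMap.separatingLeft_iff_ker_eq_bot.1 S.form_nondeg)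

theorem perp_eq_comap_dualAnnihilator (U : Submodule 𝔽 L) :
    S.perp U = U.dualAnnihilator.comap S.form := by
  ext x
  exact (Submodule.mem_dualAnnihilator _).symm

theorem perp_eq_dualCoannihilator_map (U : Submodule 𝔽 L) :
    S.perp U = (U.map S.form).dualCoannihilator := by
  have form_isAlt : S.form.IsAlt := S.form_alt
  ext x
  calc (∀ u ∈ U, S.form x u = 0)
      ↔ ∀ u ∈ U, S.form u x = 0 := forall₂_congr fun _ _ => form_isAlt.eq_iff
    _ ↔ ∀ φ ∈ U.map S.form, φ x = 0 := by
      simp only [Submodule.mem_map, forall_exists_index, and_imp, forall_apply_eq_imp_iff₂]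
    _ ↔ x ∈ (U.map S.form).dualCoannihilator := (Submodule.mem_dualCoannihilator x).symm

theorem perp_perp (U : Submodule 𝔽 L) [FiniteDimensional 𝔽 U] : S.perp (S.perp U) = U :=
  calc S.perp (S.perp U)
      = (U.map S.form).dualCoannihilator.dualAnnihilator.comap S.form := by
        rw [S.perp_eq_comap_dualAnnihilator, S.perp_eq_dualCoannihilator_map]
    _ = (U.map S.form).comap S.form := by
        rw [Subspace.dualCoannihilator_dualAnnihilator_eq]
    _ = U := Submodule.comap_map_eq_of_injective S.form_injective U

end SymplecticAlternatingAlgebra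

theorem mul_right_mem_iff_perp_general
    (S : SymplecticAlternatingAlgebra 𝔽 L) (I J : Submodule 𝔽 L) [FiniteDimensional 𝔽 I] (x : L) :
    (∀ u ∈ J, S.mul u x ∈ I) ↔ (∀ v ∈ S.perp I, S.mul v x ∈ S.perp J) := by
  simpa only [S.perp_perp] using S.mul_right_mem_perp_comm J (S.perp I) x

theorem mul_right_mem_iff_perp [FiniteDimensional 𝔽 L]
    (S : SymplecticAlternatingAlgebra 𝔽 L) (I J : Submodule 𝔽 L)
    (hI : S.IsIdeal I) (hJ : S.IsIdeal J) (x : L) :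
    (∀ u ∈ J, S.mul u x ∈ I) ↔ (∀ v ∈ S.perp I, S.mul v x ∈ S.perp J) :=
  mul_right_mem_iff_perp_general S I J x
end

section
/- No term of the lower central series of a symplectic alternating algebra L over a field 𝔽 has dimension 1; that is, dim L^n ≠ 1 for every n ≥ 1. Equivalently, no term of the upper central series of L has codimension 1. -/
variable {𝔽 : Type*} [Field 𝔽] {L : Type*} [AddCommGroup L] [Module 𝔽 L]

open SymplecticAlternatingAlgebra Module

/-!
Because `(x·y, u) = (x, u·y)`, the orthogonal complement of `L^{n+1}` is `Z_n`. By nondegeneracy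
the complement of a line is a hyperplane, so it suffices that no `Z_n` is a hyperplane. If
`L = Z_n + 𝔽x`, then `x` already lies in `Z_n`: for `n = 0` the form vanishes on `L = 𝔽x`, so
`x = 0`, and for `n = m + 1` both `x·Z_{m+1}` and `x·x = 0` lie in `Z_m`, hence so does `x·L`.
-/

lemma comap_eq_top_of_isAlt_of_sup_span_singleton_eq_top {R M N : Type*} [CommSemiring R]
    [AddCommMonoid M] [Module R M] [AddCommMonoid N] [Module R N] {B : M →ₗ[R] M →ₗ[R] N}
    (hB : B.IsAlt) {P : Submodule R M} {Q : Submodule R N} {x : M}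
    (hsup : P ⊔ Submodule.span R {x} = ⊤) (hP : P ≤ Q.comap (B x)) : Q.comap (B x) = ⊤ := by
  have hx : x ∈ Q.comap (B x) := by
    rw [Submodule.mem_comap, hB.self_eq_zero]
    exact Q.zero_mem
  rw [eq_top_iff, ← hsup]
  exact sup_le hP ((Submodule.span_singleton_le_iff_mem _ _).2 hx)

namespace SymplecticAlternatingAlgebra

variable (S : SymplecticAlternatingAlgebra 𝔽 L)

lemma form_isAlt : S.form.IsAlt := S.form_alt

lemma mul_isAlt : S.mul.IsAlt := S.mul_alt

lemma form_mul_left (x y u : L) : S.form (S.mul x y) u = S.form x (S.mul u y) := by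
  rw [S.compat, ← S.form_isAlt.neg, ← S.mul_isAlt.neg u y, map_neg, neg_neg]

lemma mem_ucs_succ {n : ℕ} {x : L} : x ∈ S.ucs (n + 1) ↔ ∀ y, S.mul x y ∈ S.ucs n := by
  simp only [ucs, Submodule.mem_iInf, Submodule.mem_comap, LinearMap.flip_apply]

lemma perp_top : S.perp ⊤ = ⊥ :=
  (Submodule.eq_bot_iff _).2 fun x hx => S.form_nondeg x fun y => hx y Submodule.mem_top

lemma mem_perp_prodSub {U V : Submodule 𝔽 L} {x : L} :
    x ∈ S.perp (S.prodSub U V) ↔ ∀ y ∈ V, S.mul x y ∈ S.perp U := by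
  calc x ∈ S.perp (S.prodSub U V)
      ↔ S.prodSub U V ≤ LinearMap.ker (S.form x) := Iff.rfl
    _ ↔ ∀ u ∈ U, ∀ y ∈ V, S.form x (S.mul u y) = 0 := Submodule.map₂_le
    _ ↔ ∀ y ∈ V, ∀ u ∈ U, S.form (S.mul x y) u = 0 := by
      simp only [form_mul_left]
      exact ⟨fun h y hy u hu => h u hu y hy, fun h u hu y hy => h y hy u hu⟩
    _ ↔ ∀ y ∈ V, S.mul x y ∈ S.perp U := Iff.rfl

lemma perp_lcs (n : ℕ) : S.perp (S.lcs n) = S.ucs n := by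
  induction n with
  | zero => exact S.perp_top
  | succ n ih =>
    ext x
    simp only [lcs, mem_perp_prodSub, ih, mem_ucs_succ, Submodule.mem_top, true_imp_iff]

lemma perp_span_singleton (w : L) :
    S.perp (Submodule.span 𝔽 {w}) = LinearMap.ker (S.form.flip w) := by
  ext x
  exact Submodule.span_singleton_le_iff_mem w (LinearMap.ker (S.form x))

lemma flip_form_ne_zero {w : L} (hw : w ≠ 0) : S.form.flip w ≠ 0 := fun h =>
  hw (S.form_nondeg w fun y => S.form_isAlt.eq_iff.1 (LinearMap.congr_fun h y))

lemma isCoatom_perp {U : Submodule 𝔽 L} (hU : IsAtom U) : IsCoatom (S.perp U) := by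
  obtain ⟨w, hw, rfl⟩ := (atom_iff_nonzero_span U).1 hU
  rw [perp_span_singleton]
  exact LinearMap.isCoatom_ker_of_surjective (LinearMap.surjective (S.flip_form_ne_zero hw))

lemma mem_ucs_of_sup_span_singleton_eq_top {n : ℕ} {x : L}
    (h : S.ucs n ⊔ Submodule.span 𝔽 {x} = ⊤) : x ∈ S.ucs n := by
  cases n with
  | zero =>
    have hform : (⊥ : Submodule 𝔽 𝔽).comap (S.form x) = ⊤ :=
      comap_eq_top_of_isAlt_of_sup_span_singleton_eq_top S.form_isAlt h bot_le
    exact S.form_nondeg x (Submodule.eq_top_iff'.1 hform)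
  | succ n =>
    have hmul : S.ucs (n + 1) ≤ (S.ucs n).comap (S.mul x) := fun z hz => by
      rw [Submodule.mem_comap, ← S.mul_isAlt.neg]
      exact neg_mem (S.mem_ucs_succ.1 hz x)
    exact S.mem_ucs_succ.2 (Submodule.eq_top_iff'.1
      (comap_eq_top_of_isAlt_of_sup_span_singleton_eq_top S.mul_isAlt h hmul))

lemma not_isCoatom_ucs (n : ℕ) : ¬IsCoatom (S.ucs n) := fun h => by
  obtain ⟨x, -, hx⟩ := SetLike.exists_of_lt h.lt_top
  exact hx (S.mem_ucs_of_sup_span_singleton_eq_top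
    (Submodule.isCompl_span_singleton_of_isCoatom_of_notMem h hx).sup_eq_top)

lemma not_isAtom_lcs (n : ℕ) : ¬IsAtom (S.lcs n) := fun h =>
  S.not_isCoatom_ucs n (S.perp_lcs n ▸ S.isCoatom_perp h)

end SymplecticAlternatingAlgebra

theorem lcs_finrank_ne_one_general (S : SymplecticAlternatingAlgebra 𝔽 L) :
    (∀ n : ℕ, Module.finrank 𝔽 (S.lcs n) ≠ 1) ∧
    (∀ n : ℕ, Module.finrank 𝔽 (L ⧸ S.ucs n) ≠ 1) := by
  refine ⟨fun n hn => ?_, fun n hn => ?_⟩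
  · exact S.not_isAtom_lcs n (Submodule.isAtom_iff_finrank_eq_one.2 hn)
  · have hsimple : IsSimpleModule 𝔽 (L ⧸ S.ucs n) := isSimpleModule_iff_finrank_eq_one.2 hn
    exact S.not_isCoatom_ucs n (isSimpleModule_iff_isCoatom.1 hsimple)

theorem lcs_finrank_ne_one [FiniteDimensional 𝔽 L]
    (S : SymplecticAlternatingAlgebra 𝔽 L) :
    (∀ n : ℕ, Module.finrank 𝔽 (S.lcs n) ≠ 1) ∧
    (∀ n : ℕ, Module.finrank 𝔽 (L ⧸ S.ucs n) ≠ 1) :=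
  lcs_finrank_ne_one_general S
end
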